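/- Let n ≥ 2 and for each l ∈ {0,…,n} let v^l be an l-form on ℝⁿ with components in L²_loc. Suppose there exists a graded form g = Σ_{l=0}^n g^l with components in L²_loc such that ∫⟨g, φ⟩dx = ∫⟨Σ_{l=0}^n(−1)^l v^l, (d+δ)φ⟩dx for every graded form φ with smooth compactly supported components (i.e. (d+δ)Σ_{l=0}^n(−1)^l v^l = g in the weak sense). Then every component of every v^l belongs to H¹_loc(ℝⁿ), i.e. has weak first partial derivatives in L²_loc. -/

import Mathlib

noncomputable section

open MeasureTheory Finset

namespace EMPaper

/-- Points of `ℝⁿ`. -/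
abbrev Pt (n : ℕ) := Fin n → ℝ

/-- A graded element of the complexified exterior algebra `Λ ℝⁿ ⊗ ℂ`, encoded by its
coefficients on the basis monomials `dx^{α₁} ∧ ⋯ ∧ dx^{α_l}`, indexed by the set
`{α₁ < ⋯ < α_l} ⊆ Fin n`. -/
abbrev GF (n : ℕ) := Finset (Fin n) → ℂ

/-- A graded differential form on `ℝⁿ`. -/
abbrev Form (n : ℕ) := Pt n → GF n

variable {n : ℕ}

/-- The sign `(-1)^{#{(i,j) ∈ I × J : j < i}}` obtained when merging the increasing
enumerations of the disjoint sets `I` and `J`. -/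
def msgn (I J : Finset (Fin n)) : ℂ :=
  (-1 : ℂ) ^ (((I ×ˢ J).filter fun p => p.2 < p.1).card)

/-- The wedge (exterior) product. -/
def wedge (u v : GF n) : GF n := fun S =>
  ∑ I ∈ S.powerset, msgn I (S \ I) * u I * v (S \ I)

/-- The vee product, determined by `⟨w, v ∨ u⟩ = ⟨w ∧ v, u⟩`. -/
def vee (v u : GF n) : GF n := fun I =>
  ∑ J ∈ (univ \ I).powerset, msgn I J * v J * u (I ∪ J)

/-- The ℂ-bilinear (non-Hermitian) inner product for which the basis monomials are
orthonormal. -/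
def ginner (u v : GF n) : ℂ := ∑ S : Finset (Fin n), u S * v S

/-- Componentwise complex conjugation. -/
def gconj (u : GF n) : GF n := fun S => (starRingEnd ℂ) (u S)

/-- Projection onto the degree-`l` part. -/
def proj (l : ℕ) (u : GF n) : GF n := fun S => if S.card = l then u S else 0

/-- `u` is homogeneous of degree `l` (an element of `Λ^l`). -/
def IsGrade (l : ℕ) (u : GF n) : Prop := ∀ S : Finset (Fin n), S.card ≠ l → u S = 0

/-- The basis one-form `dx^j`. -/
def dxe (j : Fin n) : GF n := fun S => if S = {j} then 1 else 0

/-- The one-form with components `c j`. -/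
def oneG (c : Fin n → ℂ) : GF n := fun S => ∑ j, if S = {j} then c j else 0

/-- `Σ_l (-1)^l u^l`. -/
def altSign (u : GF n) : GF n := fun S => (-1 : ℂ) ^ S.card * u S

/-- Exterior derivative `du = Σ_j dx^j ∧ ∂_j u`, expressed in terms of the family of
partial derivatives `D j = ∂_j u` at a point. -/
def gd (D : Fin n → GF n) : GF n := fun S => ∑ j, wedge (dxe j) (D j) S

/-- Coderivative `δu = (-1)^l Σ_j dx^j ∨ ∂_j u` (degreewise on graded forms), expressed
in terms of the family of partial derivatives `D j = ∂_j u` at a point. -/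
def gdel (D : Fin n → GF n) : GF n := fun S =>
  (-1 : ℂ) ^ (S.card + 1) * ∑ j, vee (dxe j) (D j) S

/-- Classical partial derivative `∂_{x^j}` of a complex-valued function. -/
def pd (j : Fin n) (f : Pt n → ℂ) : Pt n → ℂ := fun x => fderiv ℝ f x (Pi.single j 1)

/-- Componentwise classical partial derivatives of a graded form. -/
def Dcl (φ : Form n) : Fin n → Form n := fun j x S => pd j (fun y => φ y S) x

/-- A test function: smooth and compactly supported. -/
def IsTest (φ : Pt n → ℂ) : Prop := ContDiff ℝ (⊤ : ℕ∞) φ ∧ HasCompactSupport φ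

/-- A graded form all of whose components are test functions. -/
def TestForm (φ : Form n) : Prop := ∀ S : Finset (Fin n), IsTest fun x => φ x S

/-- `f ∈ L²_loc(ℝⁿ)`. -/
def L2loc (f : Pt n → ℂ) : Prop :=
  AEStronglyMeasurable f (volume : Measure (Pt n)) ∧
    ∀ K : Set (Pt n), IsCompact K → IntegrableOn (fun x => ‖f x‖ ^ 2) K volume

/-- `g` is the weak `j`-th partial derivative of `f` on `ℝⁿ`. -/
def HasWeakPD (j : Fin n) (f g : Pt n → ℂ) : Prop :=
  ∀ φ : Pt n → ℂ, IsTest φ → ∫ x, g x * φ x = -∫ x, f x * pd j φ x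

/-- All components of the graded form `w` belong to `H¹_loc(ℝⁿ)`, with weak partial
derivatives given componentwise by the family `Dw`. -/
def H1locWith (w : Form n) (Dw : Fin n → Form n) : Prop :=
  (∀ S : Finset (Fin n), L2loc fun x => w x S) ∧
    (∀ (j : Fin n) (S : Finset (Fin n)),
      HasWeakPD j (fun x => w x S) fun x => Dw j x S) ∧
    ∀ (j : Fin n) (S : Finset (Fin n)), L2loc fun x => Dw j x S

section Aux

open scoped symmDiff

/-- Sign counting the elements of `S` below `j`. -/
def esg (j : Fin n) (S : Finset (Fin n)) : ℂ := (-1) ^ (S.filter (· < j)).card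

/-- Clifford sign. -/
def csg (j : Fin n) (S : Finset (Fin n)) : ℂ := (if j ∈ S then 1 else -1) * esg j S

/-- Clifford multiplication. -/
def cl (j : Fin n) (u : GF n) : GF n := fun S => csg j S * u (S ∆ {j})

lemma wedge_dxe (j : Fin n) (u : GF n) (S : Finset (Fin n)) :
    wedge (dxe j) u S = if j ∈ S then esg j S * u (S \ {j}) else 0 := by
  have h : ∀ I ∈ S.powerset, msgn I (S \ I) * dxe j I * u (S \ I) =
      if I = {j} then msgn {j} (S \ {j}) * u (S \ {j}) else 0 := by
    intro I _
    by_cases hI : I = {j}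
    · subst hI; simp [dxe]
    · simp [dxe, hI]
  unfold wedge
  rw [Finset.sum_congr rfl h, Finset.sum_ite_eq']
  simp only [Finset.mem_powerset, Finset.singleton_subset_iff]
  split_ifs with hj
  · congr 1
    unfold msgn esg
    congr 1
    refine Finset.card_bij' (fun p _ => p.2) (fun k _ => (j, k)) ?_ ?_ ?_ ?_
    · rintro ⟨a, b⟩ h
      simp at h ⊢
      obtain ⟨⟨⟨hb, _⟩, rfl⟩, h⟩ := h
      exact ⟨hb, h⟩
    · intro k hk
      simp at hk ⊢
      exact ⟨⟨hk.1, hk.2.ne⟩, hk.2⟩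
    · rintro ⟨a, b⟩ h
      simp at h ⊢
      exact h.1.2
    · intro k hk
      rfl
  · rfl

lemma vee_dxe (j : Fin n) (u : GF n) (S : Finset (Fin n)) :
    (-1 : ℂ) ^ (S.card + 1) * vee (dxe j) u S =
      if j ∈ S then 0 else - esg j S * u (S ∪ {j}) := by
  have h : ∀ J ∈ (univ \ S).powerset, msgn S J * dxe j J * u (S ∪ J) =
      if J = {j} then msgn S {j} * u (S ∪ {j}) else 0 := by
    intro I _
    by_cases hI : I = {j}
    · subst hI; simp [dxe]
    · simp [dxe, hI]
  unfold vee
  rw [Finset.sum_congr rfl h, Finset.sum_ite_eq']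
  simp only [Finset.mem_powerset, Finset.singleton_subset_iff, mem_sdiff, mem_univ, true_and]
  by_cases hj : j ∈ S
  · simp [hj]
  · simp only [hj, not_false_eq_true, if_true, if_false]
    rw [← mul_assoc]
    congr 1
    have hm : msgn S {j} = (-1 : ℂ) ^ (S.filter (j < ·)).card := by
      unfold msgn
      congr 1
      refine Finset.card_bij' (fun p _ => p.1) (fun k _ => (k, j)) ?_ ?_ ?_ ?_
      · rintro ⟨a, b⟩ h
        simp at h ⊢
        obtain ⟨⟨ha, rfl⟩, h⟩ := h
        exact ⟨ha, h⟩
      · intro k hk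
        simp at hk ⊢
        exact hk
      · rintro ⟨a, b⟩ h
        simp at h ⊢
        exact h.1.2
      · intro k hk
        rfl
    have hc : S.card = (S.filter (· < j)).card + (S.filter (j < ·)).card := by
      rw [← Finset.card_filter_add_card_filter_not (s := S) (· < j)]
      congr 2
      ext k
      simp only [mem_filter, not_lt, and_congr_right_iff]
      intro hk
      exact ⟨fun h => lt_of_le_of_ne h (by rintro rfl; exact hj hk), le_of_lt⟩
    rw [hm, hc, esg]
    generalize (S.filter (· < j)).card = a
    generalize (S.filter (j < ·)).card = b
    have : (-1 : ℂ) ^ b * (-1) ^ b = 1 := by rw [← mul_pow]; simp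
    rw [pow_add, pow_add]
    linear_combination (-1 : ℂ) ^ a * (-1) * this

lemma gd_add_gdel (D : Fin n → GF n) : gd D + gdel D = ∑ j, cl j (D j) := by
  ext S
  simp only [Pi.add_apply, gd, gdel, Finset.sum_apply, Finset.mul_sum, vee_dxe, wedge_dxe,
    ← Finset.sum_add_distrib]
  apply Finset.sum_congr rfl
  intro j _
  unfold cl csg
  by_cases hj : j ∈ S
  · have : S ∆ {j} = S \ {j} := by
      ext k; simp [Finset.mem_symmDiff]; rintro rfl h; exact absurd hj h
    simp [hj, this]
  · have : S ∆ {j} = S ∪ {j} := by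
      ext k; simp [Finset.mem_symmDiff]
      by_cases hk : k = j
      · subst hk; simp [hj]
      · simp [hk]
    simp [hj, this]

lemma esg_symmDiff_self (j : Fin n) (S : Finset (Fin n)) : esg j (S ∆ {j}) = esg j S := by
  unfold esg
  congr 2
  ext k
  simp only [mem_filter, Finset.mem_symmDiff, mem_singleton]
  constructor
  · rintro ⟨h, h2⟩
    have := h2.ne
    tauto
  · rintro ⟨h, h2⟩
    have := h2.ne
    tauto

lemma esg_symmDiff (j k : Fin n) (S : Finset (Fin n)) :
    esg k (S ∆ {j}) = (if j < k then -1 else 1) * esg k S := by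
  unfold esg
  split_ifs with h
  · by_cases hj : j ∈ S
    · have : S.filter (· < k) = insert j ((S ∆ {j}).filter (· < k)) := by
        ext i; simp only [mem_filter, Finset.mem_symmDiff, mem_singleton, mem_insert]
        by_cases hi : i = j
        · subst hi; simp [hj, h]
        · simp [hi]
      rw [this, Finset.card_insert_of_notMem (by simp [Finset.mem_symmDiff, hj]), pow_succ]
      ring
    · have : (S ∆ {j}).filter (· < k) = insert j (S.filter (· < k)) := by
        ext i; simp only [mem_filter, Finset.mem_symmDiff, mem_singleton, mem_insert]
        by_cases hi : i = j
        · subst hi; simp [hj, h]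
        · simp [hi]
      rw [this, Finset.card_insert_of_notMem (by simp [hj]), pow_succ]
      ring
  · rw [one_mul]
    congr 2
    ext i; simp only [mem_filter, Finset.mem_symmDiff, mem_singleton]
    by_cases hi : i = j
    · subst hi; simp [h]
    · simp [hi]

lemma esg_mul_self (j : Fin n) (S : Finset (Fin n)) : esg j S * esg j S = 1 := by
  unfold esg; rw [← mul_pow]; simp

lemma cl_cl_self (j : Fin n) (u : GF n) : cl j (cl j u) = - u := by
  ext S
  simp only [cl, csg, esg_symmDiff_self, symmDiff_symmDiff_cancel_right, Pi.neg_apply]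
  have := esg_mul_self j S
  have h2 : j ∈ S ∆ {j} ↔ j ∉ S := by simp [Finset.mem_symmDiff]
  by_cases hj : j ∈ S
  · simp only [h2, hj, if_true, not_true, if_false]
    linear_combination - u S * this
  · simp only [h2, hj, if_true, not_false_eq_true, if_false]
    linear_combination - u S * this

lemma cl_anticomm (j k : Fin n) (hjk : j ≠ k) (u : GF n) :
    cl j (cl k u) = - cl k (cl j u) := by
  ext S
  simp only [cl, csg, esg_symmDiff, Pi.neg_apply]
  have h1 : k ∈ S ∆ {j} ↔ k ∈ S := by simp [Finset.mem_symmDiff, hjk.symm]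
  have h2 : j ∈ S ∆ {k} ↔ j ∈ S := by simp [Finset.mem_symmDiff, hjk]
  have h3 : S ∆ {j} ∆ {k} = S ∆ {k} ∆ {j} := by
    rw [symmDiff_assoc, symmDiff_assoc, symmDiff_comm ({j} : Finset (Fin n))]
  simp only [h1, h2, h3]
  rcases lt_or_gt_of_ne hjk with h | h
  · simp only [h, h.not_gt, if_true, if_false]; ring
  · simp only [h, h.not_gt, if_true, if_false]; ring

lemma cl_sum_smul {ι : Type*} (s : Finset ι) (j : Fin n) (c : ι → ℂ) (u : ι → GF n) :
    cl j (fun S => ∑ i ∈ s, c i * u i S) = fun S => ∑ i ∈ s, c i * cl j (u i) S := by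
  ext S
  simp only [cl, Finset.mul_sum]
  exact Finset.sum_congr rfl fun i _ => by ring

/-- The square of the symbol is scalar. -/
lemma cl_sq_sum (H : Fin n → Fin n → ℂ) (hH : ∀ i k, H i k = H k i) (u : GF n)
    (T : Finset (Fin n)) :
    ∑ i, ∑ k, H i k * cl i (cl k u) T = - (∑ i, H i i) * u T := by
  have h2 : ∑ i, ∑ k, H i k * cl i (cl k u) T = ∑ i, ∑ k, H i k * cl k (cl i u) T := by
    rw [Finset.sum_comm]
    exact Finset.sum_congr rfl fun i _ => Finset.sum_congr rfl fun k _ => by rw [hH]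
  have h3 : ∑ i, ∑ k, (H i k * cl i (cl k u) T + H i k * cl k (cl i u) T)
      = ∑ i, ∑ k, if i = k then - (2 * H i i * u T) else 0 := by
    refine Finset.sum_congr rfl fun i _ => Finset.sum_congr rfl fun k _ => ?_
    split_ifs with h
    · subst h; rw [cl_cl_self]; simp; ring
    · rw [cl_anticomm i k h]; simp
  simp only [Finset.sum_add_distrib, ← h2] at h3
  simp only [Finset.sum_ite_eq, Finset.mem_univ, if_true, Finset.sum_neg_distrib,
    ← Finset.sum_mul, ← Finset.mul_sum] at h3
  linear_combination h3 / 2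

open scoped SchwartzMap LineDeriv Laplacian ContDiff FourierTransform

/-- The `L²` norm as a real number. -/
def N2 {E : Type*} [MeasureSpace E] (f : E → ℂ) : ℝ := (eLpNorm f 2 volume).toReal

/-- Bounded Fourier multipliers are bounded on `L²`. -/
lemma N2_mult {E : Type*} [NormedAddCommGroup E] [InnerProductSpace ℝ E] [FiniteDimensional ℝ E]
    [MeasurableSpace E] [BorelSpace E] (s : E → ℂ) (hs : s.HasTemperateGrowth) (C : ℝ)
    (hC : ∀ x, ‖s x‖ ≤ C) (f : 𝓢(E, ℂ)) :
    N2 (SchwartzMap.fourierMultiplierCLM ℂ s f) ≤ C * N2 f := by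
  unfold N2
  rw [← SchwartzMap.norm_toLp, ← SchwartzMap.norm_toLp, ← SchwartzMap.norm_fourier_toL2_eq,
    ← SchwartzMap.norm_fourier_toL2_eq f, SchwartzMap.fourierMultiplierCLM_apply,
    FourierTransform.fourier_fourierInv_eq]
  have hC0 : 0 ≤ C := (norm_nonneg _).trans (hC 0)
  apply Lp.norm_le_mul_norm_of_ae_le_mul
  filter_upwards [SchwartzMap.coeFn_toLp (𝓕 f) 2,
    SchwartzMap.coeFn_toLp (SchwartzMap.smulLeftCLM ℂ s (𝓕 f)) 2] with x h1 h2
  rw [h1, h2, SchwartzMap.smulLeftCLM_apply_apply hs, norm_smul]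
  exact mul_le_mul_of_nonneg_right (hC x) (norm_nonneg _)

lemma lineDeriv_mult {E : Type*} [NormedAddCommGroup E] [InnerProductSpace ℝ E]
    [FiniteDimensional ℝ E]
    [MeasurableSpace E] [BorelSpace E] (m : E) (f : 𝓢(E, ℂ)) :
    ∂_{m} f = SchwartzMap.fourierMultiplierCLM ℂ
      (fun x => (2 * Real.pi * Complex.I) * ((inner ℝ x m : ℝ) : ℂ)) f := by
  rw [SchwartzMap.lineDeriv_eq_fourierMultiplierCLM,
    ← SchwartzMap.fourierMultiplierCLM_ofReal ℂ (by fun_prop)]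
  have : (fun x : E => (2 * Real.pi * Complex.I) * ((inner ℝ x m : ℝ) : ℂ)) =
    (2 * Real.pi * Complex.I) • (fun x : E => ((inner ℝ x m : ℝ) : ℂ)) := by
    ext x; simp
  rw [this, SchwartzMap.fourierMultiplierCLM_smul (by fun_prop)]
  rfl

/-- Resolvent solution on Euclidean space. -/
lemma solve_E (E : Type*) [NormedAddCommGroup E] [InnerProductSpace ℝ E] [FiniteDimensional ℝ E]
    [MeasurableSpace E] [BorelSpace E] {ι : Type*} [Fintype ι] (b : OrthonormalBasis ι ℝ E)
    (j : ι) (f : 𝓢(E, ℂ)) :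
    ∃ ψ : 𝓢(E, ℂ), (ψ - ((2 * Real.pi) ^ 2)⁻¹ • ∑ k, ∂_{b k} (∂_{b k} ψ) = ∂_{b j} f) ∧
      N2 ψ ≤ (2 * Real.pi) ^ 2 * N2 f ∧ ∀ k, N2 (∂_{b k} ψ : 𝓢(E, ℂ)) ≤ (2 * Real.pi) ^ 2 * N2 f := by
  have hb : ∀ k x, |inner ℝ x (b k)| ≤ ‖x‖ := fun k x => by
    simpa using abs_real_inner_le_norm x (b k)
  have hpi : (1 : ℝ) ≤ 2 * Real.pi := by linarith [Real.pi_gt_three]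
  have hr : ∀ x : E, ‖((((1 + ‖x‖ ^ 2) ^ (-1 : ℝ) : ℝ)) : ℂ)‖ = (1 + ‖x‖ ^ 2)⁻¹ := fun x => by
    rw [Complex.norm_real, Real.rpow_neg_one, Real.norm_of_nonneg (by positivity)]
  have h2pi : ‖(2 * Real.pi * Complex.I : ℂ)‖ = 2 * Real.pi := by
    simp [abs_of_pos Real.pi_pos]
  refine ⟨SchwartzMap.fourierMultiplierCLM ℂ (fun x => (((1 + ‖x‖ ^ 2) ^ (-1 : ℝ) : ℝ) : ℂ))
    (∂_{b j} f), ?_, ?_, ?_⟩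
  · rw [← SchwartzMap.laplacian_eq_sum b, SchwartzMap.laplacian_eq_fourierMultiplierCLM,
      ← SchwartzMap.fourierMultiplierCLM_ofReal ℂ (by fun_prop),
      SchwartzMap.fourierMultiplierCLM_fourierMultiplierCLM_apply (by fun_prop) (by fun_prop),
      neg_smul, smul_neg, smul_smul, inv_mul_cancel₀ (by positivity), one_smul, sub_neg_eq_add,
      SchwartzMap.fourierMultiplierCLM_apply, SchwartzMap.fourierMultiplierCLM_apply,
      ← FourierTransform.fourierInv_add]
    conv_rhs => rw [← FourierTransform.fourierInv_fourier_eq (F := 𝓢(E, ℂ)) (∂_{b j} f : 𝓢(E, ℂ))]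
    congr 1
    ext x
    rw [SchwartzMap.add_apply, SchwartzMap.smulLeftCLM_apply_apply (by fun_prop),
      SchwartzMap.smulLeftCLM_apply_apply (by fun_prop), ← add_smul]
    have : (((1 + ‖x‖ ^ 2) ^ (-1 : ℝ) : ℝ) : ℂ) +
      ((fun x : E => ((‖x‖ ^ 2 : ℝ) : ℂ)) * fun x : E => (((1 + ‖x‖ ^ 2) ^ (-1 : ℝ) : ℝ) : ℂ)) x
        = 1 := by
      simp only [Pi.mul_apply, Real.rpow_neg_one]
      norm_cast
      field_simp
    erw [this]
    rw [one_smul]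
  · rw [lineDeriv_mult,
      SchwartzMap.fourierMultiplierCLM_fourierMultiplierCLM_apply (by fun_prop) (by fun_prop)]
    apply N2_mult _ (by fun_prop)
    intro x
    rw [Pi.mul_apply, norm_mul, norm_mul, hr, h2pi, Complex.norm_real, Real.norm_eq_abs,
      inv_mul_le_iff₀ (by positivity)]
    have := hb j x
    have h3 : ‖x‖ ≤ 1 + ‖x‖ ^ 2 := by nlinarith [sq_nonneg (‖x‖ - 1)]
    calc 2 * Real.pi * |inner ℝ x (b j)| ≤ (2 * Real.pi * 1) * (1 + ‖x‖ ^ 2) := by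
          rw [mul_one]; gcongr; linarith
      _ ≤ (2 * Real.pi * (2 * Real.pi)) * (1 + ‖x‖ ^ 2) := by gcongr
      _ = _ := by ring
  · intro k
    rw [lineDeriv_mult, lineDeriv_mult,
      SchwartzMap.fourierMultiplierCLM_fourierMultiplierCLM_apply (by fun_prop) (by fun_prop),
      SchwartzMap.fourierMultiplierCLM_fourierMultiplierCLM_apply (by fun_prop) (by fun_prop)]
    apply N2_mult _ (by fun_prop)
    intro x
    rw [Pi.mul_apply, Pi.mul_apply, norm_mul, norm_mul, norm_mul _ (Complex.ofReal _),
      norm_mul _ (Complex.ofReal _), hr, h2pi,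
      Complex.norm_real, Complex.norm_real, Real.norm_eq_abs, Real.norm_eq_abs]
    have h1 := hb j x
    have h2 := hb k x
    calc _ = (2 * Real.pi) ^ 2 * (|inner ℝ x (b k)| * |inner ℝ x (b j)|) * (1 + ‖x‖ ^ 2)⁻¹ := by
          ring
      _ ≤ (2 * Real.pi) ^ 2 * (‖x‖ * ‖x‖) * (1 + ‖x‖ ^ 2)⁻¹ := by gcongr
      _ ≤ (2 * Real.pi) ^ 2 * (1 + ‖x‖ ^ 2) * (1 + ‖x‖ ^ 2)⁻¹ := by gcongr; nlinarith
      _ = _ := by field_simp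

/-- Identification of `Pt n` with Euclidean space. -/
def LE (n : ℕ) : Pt n ≃L[ℝ] EuclideanSpace ℝ (Fin n) := (EuclideanSpace.equiv (Fin n) ℝ).symm

lemma LE_single (j : Fin n) : LE n (Pi.single j 1) = EuclideanSpace.basisFun (Fin n) ℝ j := by
  ext i
  simp [LE, Pi.single_apply]

lemma LE_mp : MeasurePreserving (LE n) volume volume := PiLp.volume_preserving_toLp (Fin n)

lemma pd_comp (f : 𝓢(EuclideanSpace ℝ (Fin n), ℂ)) (j : Fin n) (x : Pt n) :
    pd j (fun y => f (LE n y)) x =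
      (∂_{EuclideanSpace.basisFun (Fin n) ℝ j} f : 𝓢(EuclideanSpace ℝ (Fin n), ℂ)) (LE n x) := by
  rw [SchwartzMap.lineDerivOp_apply_eq_fderiv, ← LE_single]
  unfold pd
  have h : HasFDerivAt (fun y => f (LE n y))
    ((fderiv ℝ f (LE n x)).comp (LE n : Pt n →L[ℝ] EuclideanSpace ℝ (Fin n))) x :=
    (f.differentiableAt.hasFDerivAt).comp x (LE n).hasFDerivAt
  rw [h.fderiv]
  rfl

lemma N2_comp (f : EuclideanSpace ℝ (Fin n) → ℂ) (hf : Continuous f) :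
    N2 (fun y => f (LE n y)) = N2 f := by
  unfold N2
  rw [← eLpNorm_comp_measurePreserving hf.aestronglyMeasurable (LE_mp (n := n))]
  rfl

lemma MemLp_comp (f : 𝓢(EuclideanSpace ℝ (Fin n), ℂ)) :
    MemLp (fun y => f (LE n y)) 2 (volume : Measure (Pt n)) :=
  (f.memLp 2 volume).comp_measurePreserving LE_mp

/-- Resolvent solution on `Pt n`. -/
lemma solve_Pt (j : Fin n) (φ : Pt n → ℂ) (hφ : IsTest φ) :
    ∃ ψ : Pt n → ℂ, ContDiff ℝ ∞ ψ ∧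
      (∀ x, ψ x - ((((2 * Real.pi) ^ 2)⁻¹ : ℝ) : ℂ) * ∑ k, pd k (pd k ψ) x = pd j φ x) ∧
      MemLp ψ 2 volume ∧ N2 ψ ≤ (2 * Real.pi) ^ 2 * N2 φ ∧
      ∀ k, MemLp (pd k ψ) 2 volume ∧ N2 (pd k ψ) ≤ (2 * Real.pi) ^ 2 * N2 φ := by
  have h1 : HasCompactSupport (fun y => φ ((LE n).symm y)) :=
    hφ.2.comp_homeomorph (LE n).symm.toHomeomorph
  have h2 : ContDiff ℝ ∞ (fun y => φ ((LE n).symm y)) := hφ.1.comp (LE n).symm.contDiff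
  set f := h1.toSchwartzMap h2 with hf
  have hfφ : (fun y => f (LE n y)) = φ := by
    ext y
    change φ ((LE n).symm (LE n y)) = φ y
    simp
  obtain ⟨ψ, e1, e2, e3⟩ := solve_E _ (EuclideanSpace.basisFun (Fin n) ℝ) j f
  have hpd : ∀ k, pd k (fun y => ψ (LE n y)) = fun y =>
      (∂_{EuclideanSpace.basisFun (Fin n) ℝ k} ψ : 𝓢(EuclideanSpace ℝ (Fin n), ℂ)) (LE n y) :=
    fun k => funext fun x => pd_comp ψ k x
  have hN : N2 φ = N2 f := by rw [← hfφ, N2_comp _ f.continuous]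
  refine ⟨fun y => ψ (LE n y), (ψ.smooth ⊤).comp (LE n).contDiff, ?_, MemLp_comp ψ, ?_, ?_⟩
  · intro x
    have := congrArg (fun F : 𝓢(EuclideanSpace ℝ (Fin n), ℂ) => F (LE n x)) e1
    simp only [SchwartzMap.sub_apply, SchwartzMap.smul_apply, SchwartzMap.sum_apply] at this
    rw [← hfφ, pd_comp, ← this]
    simp only [hpd, pd_comp, Complex.real_smul]
  · rw [hN, N2_comp _ ψ.continuous]; exact e2
  · intro k
    rw [hpd, hN, N2_comp _ (SchwartzMap.continuous _)]
    exact ⟨MemLp_comp _, e3 k⟩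

lemma pd_contDiff {f : Pt n → ℂ} (hf : ContDiff ℝ ∞ f) (j : Fin n) : ContDiff ℝ ∞ (pd j f) :=
  (hf.fderiv_right (m := ∞) (by simp)).clm_apply contDiff_const

lemma IsTest.pd {f : Pt n → ℂ} (hf : IsTest f) (j : Fin n) : IsTest (pd j f) :=
  ⟨pd_contDiff hf.1 j, hf.2.fderiv_apply (𝕜 := ℝ) _⟩

lemma IsTest.mul {f g : Pt n → ℂ} (hf : IsTest f) (hg : ContDiff ℝ ∞ g) :
    IsTest (fun x => f x * g x) :=
  ⟨hf.1.mul hg, hf.2.mul_right⟩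

lemma pd_mul {f g : Pt n → ℂ} (hf : ContDiff ℝ ∞ f) (hg : ContDiff ℝ ∞ g) (j : Fin n) (x : Pt n) :
    pd j (fun y => f y * g y) x = pd j f x * g x + f x * pd j g x := by
  unfold pd
  rw [fderiv_fun_mul (hf.differentiable (by simp)).differentiableAt
    (hg.differentiable (by simp)).differentiableAt]
  simp
  ring

lemma pd_sum_mul {ι : Type*} (s : Finset ι) (f : ι → Pt n → ℂ) (c : ι → ℂ)
    (hf : ∀ i, ContDiff ℝ ∞ (f i)) (j : Fin n) (x : Pt n) :
    pd j (fun y => ∑ i ∈ s, f i y * c i) x = ∑ i ∈ s, pd j (f i) x * c i := by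
  have h : ∀ i, DifferentiableAt ℝ (fun y => f i y * c i) x := fun i =>
    (((hf i).mul contDiff_const).differentiable (by simp)).differentiableAt
  unfold pd
  rw [fderiv_fun_sum (fun i _ => h i), _root_.sum_apply]
  refine Finset.sum_congr rfl fun i _ => ?_
  have := pd_mul (hf i) (contDiff_const (c := c i)) j x
  simp only [pd] at this
  rw [this]
  simp

lemma pd_comm {f : Pt n → ℂ} (hf : ContDiff ℝ ∞ f) (i k : Fin n) (x : Pt n) :
    pd i (pd k f) x = pd k (pd i f) x := by
  have hd : DifferentiableAt ℝ (fderiv ℝ f) x :=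
    ((hf.fderiv_right (m := ∞) (by simp)).differentiable (by simp)).differentiableAt
  have key : ∀ a b : Fin n, pd a (pd b f) x =
      fderiv ℝ (fderiv ℝ f) x (Pi.single a 1) (Pi.single b 1) := by
    intro a b
    unfold pd
    rw [fderiv_clm_apply hd (differentiableAt_const _)]
    simp
  rw [key, key]
  exact (hf.contDiffAt.isSymmSndFDerivAt (by simp; exact WithTop.coe_le_coe.2 le_top)) _ _

lemma IsTest.memLp {f : Pt n → ℂ} (hf : IsTest f) : MemLp f 2 (volume : Measure (Pt n)) :=
  hf.1.continuous.memLp_of_hasCompactSupport hf.2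

lemma L2loc.mul_test {f χ : Pt n → ℂ} (hf : L2loc f) (hχ : IsTest χ) :
    MemLp (fun x => f x * χ x) 2 (volume : Measure (Pt n)) := by
  have hm : AEStronglyMeasurable (fun x => f x * χ x) (volume : Measure (Pt n)) :=
    hf.1.mul hχ.1.continuous.aestronglyMeasurable
  rw [memLp_two_iff_integrable_sq_norm hm]
  obtain ⟨M, hM⟩ := hχ.1.continuous.bounded_above_of_compact_support hχ.2
  have hI := hf.2 (tsupport χ) hχ.2
  rw [← integrable_indicator_iff (isClosed_tsupport χ).measurableSet] at hI
  refine (hI.const_mul (M ^ 2)).mono' (hm.norm.pow 2) (Filter.Eventually.of_forall fun x => ?_)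
  rw [Real.norm_of_nonneg (by positivity)]
  by_cases hx : x ∈ tsupport χ
  · rw [Set.indicator_of_mem hx, norm_mul, mul_pow, mul_comm]
    gcongr
    exact hM x
  · rw [Set.indicator_of_notMem hx, image_eq_zero_of_notMem_tsupport hx]
    simp

lemma integrable_mul2 {F G : Pt n → ℂ} (hF : MemLp F 2 (volume : Measure (Pt n)))
    (hG : MemLp G 2 (volume : Measure (Pt n))) : Integrable (fun x => F x * G x) volume :=
  hF.integrable_mul hG

lemma norm_integral_mul_le {F G : Pt n → ℂ} (hF : MemLp F 2 (volume : Measure (Pt n)))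
    (hG : MemLp G 2 (volume : Measure (Pt n))) : ‖∫ x, F x * G x‖ ≤ N2 F * N2 G := by
  have h1 : ‖∫ x, F x * G x‖ₑ ≤ eLpNorm (fun x => F x * G x) 1 volume := by
    rw [eLpNorm_one_eq_lintegral_enorm]
    exact enorm_integral_le_lintegral_enorm _
  have h2 : eLpNorm (F • G) 1 volume ≤ eLpNorm F 2 volume * eLpNorm G 2 volume :=
    eLpNorm_smul_le_mul_eLpNorm (p := 2) (q := 2) (r := 1) hG.1 hF.1
  have h3 := h1.trans h2
  have hfin : eLpNorm F 2 volume * eLpNorm G 2 volume ≠ ⊤ :=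
    ENNReal.mul_ne_top hF.2.ne hG.2.ne
  have h4 := ENNReal.toReal_mono hfin h3
  rwa [toReal_enorm, ENNReal.toReal_mul] at h4

lemma N2_nonneg {E : Type*} [MeasureSpace E] (f : E → ℂ) : 0 ≤ N2 f := ENNReal.toReal_nonneg

/-- Basis monomial. -/
def eb (S : Finset (Fin n)) : GF n := fun T => if T = S then 1 else 0

/-- The key a priori estimate. -/
lemma key_bound (v g : Form n)
    (hv : ∀ S : Finset (Fin n), L2loc fun x => v x S)
    (hg : ∀ S : Finset (Fin n), L2loc fun x => g x S)
    (hweak : ∀ φ : Form n, TestForm φ →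
      ∫ x, ginner (g x) (φ x)
        = ∫ x, ginner (altSign (v x))
            ((gd fun j => Dcl φ j x) + gdel fun j => Dcl φ j x))
    (S : Finset (Fin n)) (j : Fin n) (χ : Pt n → ℂ) (hχ : IsTest χ) :
    ∃ C : ℝ, ∀ φ, IsTest φ → ‖∫ x, (v x S * χ x) * pd j φ x‖ ≤ C * N2 φ := by
  set c : ℂ := ((((2 * Real.pi) ^ 2)⁻¹ : ℝ) : ℂ) with hc
  set G : Fin n → Pt n → ℂ := fun k x => ∑ T, cl k (eb S) T * (g x T * χ x) with hG
  set B : Fin n → Pt n → ℂ := fun k x => ∑ T, ∑ i,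
    ((-1) ^ T.card * cl i (cl k (eb S)) T) * (v x T * pd i χ x) with hB
  set H : Fin n → Pt n → ℂ := fun k x => G k x - B k x with hH
  have hGm : ∀ k, MemLp (G k) 2 volume := fun k =>
    memLp_finsetSum _ fun T _ => ((hg T).mul_test hχ).const_mul _
  have hBm : ∀ k, MemLp (B k) 2 volume := fun k =>
    memLp_finsetSum _ fun T _ => memLp_finsetSum _ fun i _ =>
      ((hv T).mul_test (hχ.pd i)).const_mul _
  have hHm : ∀ k, MemLp (H k) 2 volume := fun k => (hGm k).sub (hBm k)
  have hAm := (hv S).mul_test hχ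
  refine ⟨(2 * Real.pi) ^ 2 * (N2 (fun x => v x S * χ x) + ‖c * (-1) ^ S.card‖ * ∑ k, N2 (H k)),
    fun φ hφ => ?_⟩
  obtain ⟨ψ, hψs, hψe, hψm, hψb, hψk⟩ := solve_Pt j φ hφ
  set Φ : Form n := fun x T => ∑ k, (χ x * pd k ψ x) * cl k (eb S) T with hΦ
  have hΦk : ∀ k, IsTest (fun x => χ x * pd k ψ x) := fun k => hχ.mul (pd_contDiff hψs k)
  have hΦt : TestForm Φ := by
    intro T
    refine ⟨?_, ?_⟩
    · exact ContDiff.sum fun k _ => (hΦk k).1.mul contDiff_const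
    · apply hχ.2.mono
      intro x hx
      contrapose! hx
      simp only [Function.mem_support, not_not] at hx ⊢
      simp [hΦ, hx]
  have hgΦ : ∀ x, ginner (g x) (Φ x) = ∑ k, G k x * pd k ψ x := by
    intro x
    simp only [ginner, hΦ, hG, Finset.mul_sum, Finset.sum_mul]
    rw [Finset.sum_comm]
    exact Finset.sum_congr rfl fun k _ => Finset.sum_congr rfl fun T _ => by ring
  have hDΦ : ∀ x T, ((gd fun j => Dcl Φ j x) + gdel fun j => Dcl Φ j x) T =
      (∑ i, ∑ k, (pd i χ x * pd k ψ x) * cl i (cl k (eb S)) T)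
        - (χ x * ∑ i, pd i (pd i ψ) x) * eb S T := by
    intro x T
    rw [gd_add_gdel, Finset.sum_apply]
    have h1 : ∀ i, Dcl Φ i x = fun T => ∑ k,
        (pd i χ x * pd k ψ x + χ x * pd i (pd k ψ) x) * cl k (eb S) T := by
      intro i
      ext T
      simp only [Dcl, hΦ]
      rw [pd_sum_mul _ _ _ (fun k => (hΦk k).1)]
      exact Finset.sum_congr rfl fun k _ => by rw [pd_mul hχ.1 (pd_contDiff hψs k)]
    simp only [h1, cl_sum_smul]
    simp only [add_mul, Finset.sum_add_distrib]
    rw [cl_sq_sum (fun i k => χ x * pd i (pd k ψ) x)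
      (fun i k => by rw [pd_comm hψs])]
    rw [Finset.mul_sum]
    ring
  have hwD : ∀ x, ginner (altSign (v x)) ((gd fun j => Dcl Φ j x) + gdel fun j => Dcl Φ j x) =
      (∑ k, B k x * pd k ψ x) - (-1) ^ S.card * (v x S * χ x) * ∑ i, pd i (pd i ψ) x := by
    intro x
    unfold ginner
    simp only [hDΦ, altSign, mul_sub, Finset.sum_sub_distrib]
    congr 1
    · simp only [hB, Finset.mul_sum, Finset.sum_mul]
      have : ∀ T : Finset (Fin n), ∑ i : Fin n, ∑ k : Fin n,
          (-1 : ℂ) ^ T.card * v x T * (pd i χ x * pd k ψ x * cl i (cl k (eb S)) T) =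
          ∑ k : Fin n, ∑ i : Fin n,
          (-1 : ℂ) ^ T.card * v x T * (pd i χ x * pd k ψ x * cl i (cl k (eb S)) T) :=
        fun T => Finset.sum_comm
      simp only [this]
      rw [Finset.sum_comm]
      exact Finset.sum_congr rfl fun k _ => Finset.sum_congr rfl fun T _ =>
        Finset.sum_congr rfl fun i _ => by ring
    · simp only [eb, mul_ite, mul_one, mul_zero, Finset.sum_ite_eq', Finset.mem_univ, if_true]
      ring
  have hc0 : c ≠ 0 := by
    rw [hc]; norm_cast; positivity
  have hsg : ((-1 : ℂ) ^ S.card) * (-1) ^ S.card = 1 := by rw [← mul_pow]; simp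
  have hint1 : Integrable (fun x => ∑ k, G k x * pd k ψ x) volume :=
    integrable_finsetSum _ fun k _ => integrable_mul2 (hGm k) (hψk k).1
  have hint2 : Integrable (fun x => ∑ k, B k x * pd k ψ x) volume :=
    integrable_finsetSum _ fun k _ => integrable_mul2 (hBm k) (hψk k).1
  have hint3 := integrable_mul2 hAm hψm
  have hint4 := integrable_mul2 hAm (hφ.pd j).memLp
  have hw := hweak Φ hΦt
  simp only [hgΦ] at hw
  have hwD' : ∀ x, ginner (altSign (v x)) ((gd fun j => Dcl Φ j x) + gdel fun j => Dcl Φ j x) =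
      (∑ k, B k x * pd k ψ x) - (c⁻¹ * (-1) ^ S.card) *
        ((v x S * χ x) * ψ x - (v x S * χ x) * pd j φ x) := by
    intro x
    have hL : ∑ i, pd i (pd i ψ) x = c⁻¹ * (ψ x - pd j φ x) := by
      have := hψe x
      rw [← hc] at this
      rw [eq_inv_mul_iff_mul_eq₀ hc0]
      linear_combination -this
    rw [hwD, hL]
    ring
  simp only [hwD'] at hw
  have hint5 : Integrable (fun x => (v x S * χ x) * ψ x - (v x S * χ x) * pd j φ x) volume :=
    hint3.sub hint4
  rw [integral_sub hint2 (hint5.const_mul _), integral_const_mul,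
    integral_sub hint3 hint4] at hw
  have hHi : ∫ x, ∑ k, H k x * pd k ψ x
      = (∫ x, ∑ k, G k x * pd k ψ x) - ∫ x, ∑ k, B k x * pd k ψ x := by
    rw [← integral_sub hint1 hint2]
    congr 1
    ext x
    rw [← Finset.sum_sub_distrib]
    exact Finset.sum_congr rfl fun k _ => by simp only [hH]; ring
  have hfin : ∫ x, (v x S * χ x) * pd j φ x = (∫ x, (v x S * χ x) * ψ x) +
      (c * (-1) ^ S.card) * ∑ k, ∫ x, H k x * pd k ψ x := by
    rw [← integral_finsetSum _ fun k _ => integrable_mul2 (hHm k) (hψk k).1, hHi, hw]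
    have hcc : c * c⁻¹ = 1 := mul_inv_cancel₀ hc0
    generalize (∫ x, (v x S * χ x) * pd j φ x) = a
    generalize (∫ x, (v x S * χ x) * ψ x) = b
    linear_combination (a - b) * (-1) * ((-1 : ℂ) ^ S.card * (-1) ^ S.card * hcc + hsg)
  rw [hfin]
  calc _ ≤ ‖∫ x, (v x S * χ x) * ψ x‖ + ‖c * (-1) ^ S.card‖ * ∑ k, ‖∫ x, H k x * pd k ψ x‖ := by
        refine (norm_add_le _ _).trans ?_
        rw [norm_mul]
        gcongr
        exact norm_sum_le _ _
    _ ≤ N2 (fun x => v x S * χ x) * ((2 * Real.pi) ^ 2 * N2 φ) + ‖c * (-1) ^ S.card‖ *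
        ∑ k, N2 (H k) * ((2 * Real.pi) ^ 2 * N2 φ) := by
        gcongr with k
        · refine (norm_integral_mul_le hAm hψm).trans ?_
          gcongr
          exact N2_nonneg _
        · refine (norm_integral_mul_le (hHm k) (hψk k).1).trans ?_
          have := N2_nonneg (H k)
          have := (hψk k).2
          gcongr
    _ = _ := by rw [← Finset.sum_mul]; ring

lemma IsTest.add {f g : Pt n → ℂ} (hf : IsTest f) (hg : IsTest g) : IsTest (f + g) :=
  ⟨hf.1.add hg.1, hf.2.add hg.2⟩

/-- The space of test functions. -/
def TestSpace (n : ℕ) : Submodule ℂ (Pt n → ℂ) where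
  carrier := {f | IsTest f}
  add_mem' := fun hf hg => hf.add hg
  zero_mem' := ⟨contDiff_const, HasCompactSupport.zero⟩
  smul_mem' := fun c f hf => ⟨contDiff_const.mul hf.1, hf.2.mul_left (f := fun _ => c)⟩

/-- Test functions as `L²` functions. -/
def testToLp (n : ℕ) : TestSpace n →ₗ[ℂ] Lp ℂ 2 (volume : Measure (Pt n)) where
  toFun := fun f => (IsTest.memLp f.2).toLp
  map_add' := fun f g => MemLp.toLp_add _ _
  map_smul' := fun c f => MemLp.toLp_const_smul c (IsTest.memLp f.2)

lemma dense_testToLp : DenseRange (testToLp n) := by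
  intro f
  refine (mem_closure_iff_nhds_basis Metric.nhds_basis_closedBall).2 fun ε hε ↦ ?_
  obtain ⟨g, hg₁, hg₂, hg₃⟩ := MemLp.exist_eLpNorm_sub_le (by simp) (by simp) (Lp.memLp f) hε
  have hg : IsTest g := ⟨hg₂, hg₁⟩
  refine ⟨testToLp n ⟨g, hg⟩, ⟨_, rfl⟩, ?_⟩
  have : (f : Pt n → ℂ) - (hg.memLp.toLp : Pt n → ℂ) =ᵐ[volume] (f : Pt n → ℂ) - g := by
    filter_upwards [hg.memLp.coeFn_toLp] with x hx
    simp [hx]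
  rw [Metric.mem_closedBall', Lp.dist_def]
  change (eLpNorm ((f : Pt n → ℂ) - (hg.memLp.toLp : Pt n → ℂ)) 2 volume).toReal ≤ ε
  rw [eLpNorm_congr_ae this]
  grw [hg₃, ENNReal.toReal_ofReal hε.le]
  simp

lemma weak_of_bound (j : Fin n) (u : Pt n → ℂ) (hu : MemLp u 2 (volume : Measure (Pt n))) (C : ℝ)
    (hC : ∀ φ, IsTest φ → ‖∫ x, u x * pd j φ x‖ ≤ C * N2 φ) :
    ∃ h : Pt n → ℂ, MemLp h 2 volume ∧ HasWeakPD j u h := by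
  have hint : ∀ φ : Pt n → ℂ, IsTest φ → Integrable (fun x => u x * pd j φ x) volume :=
    fun φ hφ => integrable_mul2 hu (hφ.pd j).memLp
  let Lf : TestSpace n →ₗ[ℂ] ℂ :=
    { toFun := fun φ => -∫ x, u x * pd j φ.1 x
      map_add' := by
        intro φ ψ
        rw [← neg_add, ← integral_add (hint _ φ.2) (hint _ ψ.2)]
        congr 2
        ext x
        have : pd j (φ + ψ : TestSpace n).1 x = pd j φ.1 x + pd j ψ.1 x := by
          unfold pd
          change fderiv ℝ (φ.1 + ψ.1) x _ = _
          rw [fderiv_add (φ.2.1.differentiable (by simp)).differentiableAt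
            (ψ.2.1.differentiable (by simp)).differentiableAt]
          rfl
        rw [this]; ring
      map_smul' := by
        intro c φ
        simp only [RingHom.id_apply, smul_eq_mul, mul_neg]
        rw [← integral_const_mul]
        congr 2
        ext x
        have : pd j (c • φ : TestSpace n).1 x = c * pd j φ.1 x := by
          have := pd_mul (contDiff_const (c := c)) φ.2.1 j x
          change pd j (fun y => c * φ.1 y) x = _
          rw [this]
          simp [pd]
        rw [this]; ring }
  have hb : ∃ C, ∀ φ, ‖Lf φ‖ ≤ C * ‖testToLp n φ‖ := by
    refine ⟨C, fun φ => ?_⟩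
    have h1 : ‖testToLp n φ‖ = N2 φ.1 := Lp.norm_toLp _ (IsTest.memLp φ.2)
    rw [h1]
    change ‖-∫ x, u x * pd j φ.1 x‖ ≤ _
    rw [norm_neg]
    exact hC _ φ.2
  let ℓ := Lf.extendOfNorm (testToLp n)
  let y := (InnerProductSpace.toDual ℂ (Lp ℂ 2 (volume : Measure (Pt n)))).symm ℓ
  refine ⟨fun x => (starRingEnd ℂ) (y x), (Lp.memLp y).star, fun φ hφ => ?_⟩
  have h1 : ℓ (testToLp n ⟨φ, hφ⟩) = Lf ⟨φ, hφ⟩ :=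
    LinearMap.extendOfNorm_eq dense_testToLp hb _
  have h2 : inner ℂ y (testToLp n ⟨φ, hφ⟩) = ℓ (testToLp n ⟨φ, hφ⟩) :=
    InnerProductSpace.toDual_symm_apply
  rw [h1, L2.inner_def] at h2
  change _ = -∫ x, u x * pd j φ x at h2
  rw [← h2]
  apply integral_congr_ae
  filter_upwards [hφ.memLp.coeFn_toLp] with x hx
  change _ = inner ℂ (y x) ((hφ.memLp.toLp : Pt n → ℂ) x)
  rw [hx]
  simp [mul_comm]

lemma MemLp.l2loc {f : Pt n → ℂ} (hf : MemLp f 2 (volume : Measure (Pt n))) : L2loc f :=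
  ⟨hf.1, fun _ _ => ((memLp_two_iff_integrable_sq_norm hf.1).1 hf).integrableOn⟩

lemma pd_zero_of_notMem {f : Pt n → ℂ} (j : Fin n) {x : Pt n} (hx : x ∉ tsupport f) :
    pd j f x = 0 := by
  unfold pd
  rw [fderiv_of_notMem_tsupport (𝕜 := ℝ) hx]
  simp

/-- A sequence of cutoffs. -/
lemma exists_cutoffs (n : ℕ) : ∃ χ : ℕ → Pt n → ℂ, (∀ k, IsTest (χ k)) ∧
    (∀ (k : ℕ) x, ‖x‖ ≤ k + 1 → χ k x = 1) ∧ ∀ (k : ℕ) x, (k : ℝ) + 2 ≤ ‖x‖ → χ k x = 0 := by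
  let b : ∀ k : ℕ, ContDiffBump (0 : Pt n) := fun k =>
    ⟨k + 1, k + 2, by positivity, by linarith⟩
  refine ⟨fun k x => ((b k x : ℝ) : ℂ), fun k => ⟨?_, ?_⟩, fun k x hx => ?_, fun k x hx => ?_⟩
  · exact Complex.ofRealCLM.contDiff.comp (b k).contDiff
  · exact (b k).hasCompactSupport.comp_left (g := Complex.ofReal) rfl
  · beta_reduce; rw [(b k).one_of_mem_closedBall (by simpa using hx)]; rfl
  · beta_reduce; rw [(b k).zero_of_le_dist (by simpa using hx)]; rfl

/-- Gluing of local weak derivatives. -/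
lemma glue (j : Fin n) (u : Pt n → ℂ) (hu : L2loc u)
    (hloc : ∀ χ, IsTest χ → ∃ h : Pt n → ℂ, MemLp h 2 volume ∧
      HasWeakPD j (fun x => u x * χ x) h) :
    ∃ h : Pt n → ℂ, HasWeakPD j u h ∧ L2loc h := by
  obtain ⟨χ, hχ, hχ1, hχ0⟩ := exists_cutoffs n
  choose hh hm hw using fun k => hloc (χ k) (hχ k)
  let η : ℕ → Pt n → ℂ := fun k x => χ k x - (if k = 0 then 0 else χ (k - 1) x)
  have hη : ∀ k, IsTest (η k) := by
    intro k
    rcases Nat.eq_zero_or_pos k with rfl | hk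
    · simpa [η] using hχ 0
    · have : η k = fun x => χ k x - χ (k - 1) x := by ext x; simp [η, hk.ne']
      rw [this]
      exact ⟨(hχ k).1.sub (hχ _).1, (hχ k).2.sub (hχ _).2⟩
  have hηsum : ∀ N x, ∑ k ∈ range (N + 1), η k x = χ N x := by
    intro N x
    induction N with
    | zero => simp [η]
    | succ N ih => rw [Finset.sum_range_succ, ih]; simp [η]
  have hη0 : ∀ (k : ℕ) x, k ≠ 0 → ‖x‖ ≤ k → η k x = 0 := by
    intro k x hk hx
    obtain ⟨m, rfl⟩ := Nat.exists_eq_succ_of_ne_zero hk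
    simp only [η, Nat.succ_ne_zero, if_false, Nat.succ_sub_one]
    push_cast at hx
    rw [hχ1 m x (by simpa using hx), hχ1 (m + 1) x (by push_cast; linarith)]
    simp
  have hηs : ∀ k, tsupport (η k) ⊆ Metric.closedBall 0 (k + 2) := by
    intro k
    apply closure_minimal _ Metric.isClosed_closedBall
    intro x hx
    by_contra hx2
    rw [mem_closedBall_zero_iff, not_le] at hx2
    apply hx
    simp only [η]
    rw [hχ0 k x hx2.le]
    split_ifs with hk
    · simp
    · rw [hχ0 (k - 1) x]
      · simp
      · have : ((k - 1 : ℕ) : ℝ) ≤ k := by exact_mod_cast Nat.sub_le k 1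
        linarith
  let HN : ℕ → Pt n → ℂ := fun N x => ∑ k ∈ range (N + 1), hh (k + 1) x * η k x
  let h : Pt n → ℂ := fun x => ∑' k, hh (k + 1) x * η k x
  have hEq : ∀ (N : ℕ) (x : Pt n), ‖x‖ ≤ N + 1 → h x = HN N x := by
    intro N x hx
    apply tsum_eq_sum
    intro k hk
    simp only [mem_range, not_lt] at hk
    have : ((N + 1 : ℕ) : ℝ) ≤ k := by exact_mod_cast hk
    push_cast at this
    rw [hη0 k x (by omega) (by linarith), mul_zero]
  have hHNk : ∀ k, MemLp (fun x => hh (k + 1) x * η k x) 2 volume := fun k =>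
    (MemLp.l2loc (hm (k + 1))).mul_test (hη k)
  have hHN : ∀ N, MemLp (HN N) 2 volume := fun N => memLp_finsetSum _ fun k _ => hHNk k
  refine ⟨h, ?_, ?_, ?_⟩
  · intro φ hφ
    obtain ⟨R, hR⟩ := hφ.2.isBounded.subset_closedBall (0 : Pt n)
    obtain ⟨N, hN⟩ := exists_nat_ge R
    have hout : ∀ x, x ∈ tsupport φ → ‖x‖ ≤ N + 1 := fun x hx => by
      have := mem_closedBall_zero_iff.1 (hR hx)
      linarith
    have e1 : ∀ x, h x * φ x = ∑ k ∈ range (N + 1), hh (k + 1) x * (η k x * φ x) := by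
      intro x
      by_cases hx : x ∈ tsupport φ
      · rw [hEq N x (hout x hx)]
        simp only [HN, Finset.sum_mul, mul_assoc]
      · simp [image_eq_zero_of_notMem_tsupport hx]
    have hηφ : ∀ k, IsTest (fun x => η k x * φ x) := fun k => (hη k).mul hφ.1
    have e2 : ∀ k x, (u x * χ (k + 1) x) * pd j (fun x => η k x * φ x) x =
        u x * pd j (fun x => η k x * φ x) x := by
      intro k x
      by_cases hx : x ∈ tsupport (fun x => η k x * φ x)
      · have := mem_closedBall_zero_iff.1 (hηs k (tsupport_mul_subset_left hx))
        rw [hχ1 (k + 1) x (by push_cast; linarith)]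
        ring
      · rw [pd_zero_of_notMem j hx]; simp
    have hi : ∀ k, Integrable (fun x => u x * pd j (fun x => η k x * φ x) x) volume := by
      intro k
      have := integrable_mul2 (hu.mul_test (hχ (k + 1))) ((hηφ k).pd j).memLp
      simpa only [e2] using this
    have e3 : ∀ x, ∑ k ∈ range (N + 1), pd j (fun x => η k x * φ x) x = pd j φ x := by
      intro x
      have := pd_sum_mul (range (N + 1)) (fun k x => η k x * φ x) (fun _ => 1)
        (fun k => (hηφ k).1) j x
      simp only [mul_one] at this
      rw [← this]
      congr 1
      ext y
      rw [← Finset.sum_mul, hηsum]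
      by_cases hy : y ∈ tsupport φ
      · rw [hχ1 N y (hout y hy), one_mul]
      · simp [image_eq_zero_of_notMem_tsupport hy]
    simp only [e1]
    rw [integral_finsetSum _ fun k _ => integrable_mul2 (hm (k + 1)) (hηφ k).memLp]
    have e4 : ∀ k, ∫ x, hh (k + 1) x * (η k x * φ x) =
        -∫ x, u x * pd j (fun x => η k x * φ x) x := by
      intro k
      rw [hw (k + 1) _ (hηφ k)]
      simp only [e2]
    simp only [e4, Finset.sum_neg_distrib]
    rw [← integral_finsetSum _ fun k _ => hi k]
    simp only [← Finset.mul_sum, e3]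
  · refine aestronglyMeasurable_of_tendsto_ae Filter.atTop (fun N => (hHN N).1)
      (Filter.Eventually.of_forall fun x => ?_)
    obtain ⟨N, hN⟩ := exists_nat_ge ‖x‖
    refine tendsto_const_nhds.congr' ?_
    filter_upwards [Filter.eventually_ge_atTop N] with M hM
    apply hEq
    have : (N : ℝ) ≤ M := by exact_mod_cast hM
    linarith
  · intro K hK
    obtain ⟨R, hR⟩ := hK.isBounded.subset_closedBall (0 : Pt n)
    obtain ⟨N, hN⟩ := exists_nat_ge R
    refine ((MemLp.l2loc (hHN N)).2 K hK).congr_fun (fun x hx => ?_) hK.measurableSet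
    have := mem_closedBall_zero_iff.1 (hR hx)
    simp only
    rw [hEq N x (by linarith)]

end Aux

/-- Lemma A.6: local regularity for `d + δ`.  If a graded form `v`
with components in `L²_loc(ℝⁿ)` satisfies `(d+δ) Σ_l (−1)^l v^l = g` in the weak sense
for some graded form `g` with components in `L²_loc(ℝⁿ)`, then every component of `v`
belongs to `H¹_loc(ℝⁿ)`. -/
theorem statement6 (hn : 2 ≤ n) (v g : Form n)
    (hv : ∀ S : Finset (Fin n), L2loc fun x => v x S)
    (hg : ∀ S : Finset (Fin n), L2loc fun x => g x S)
    (hweak : ∀ φ : Form n, TestForm φ →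
      ∫ x, ginner (g x) (φ x)
        = ∫ x, ginner (altSign (v x))
            ((gd fun j => Dcl φ j x) + gdel fun j => Dcl φ j x)) :
    ∀ (S : Finset (Fin n)) (j : Fin n),
      ∃ h : Pt n → ℂ, HasWeakPD j (fun x => v x S) h ∧ L2loc h := by
  intro S j
  refine glue j _ (hv S) fun χ hχ => ?_
  obtain ⟨C, hC⟩ := key_bound v g hv hg hweak S j χ hχ
  exact weak_of_bound j _ ((hv S).mul_test hχ) C hC

end EMPaper
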